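/- arXiv:2202.13014 — 2 statements merged into one kernel-verified Lean document; each statement's English description precedes it below -/
import Mathlib

section
/- For all natural numbers k and t there exists a natural number s (one may take s = O(k·t²)) such that the following holds for every natural number r. Let V be a finite set equipped with: a binary relation E ⊆ V × V such that for all A ⊆ V and B ⊆ V the relation E ∩ (A × B) has a duality of order k; a pseudometric dist on V; and a partition 𝒫 of V with |𝒫| ≤ t, such that for all u,v with dist(u,v) > r the truth of E(u,v) depends only on C(u) and C(v). Then there is a set S ⊆ V with |S| ≤ s such that for all u, v, u', v' ∈ V with dist(u,v) > 5r, dist(u',v') > 5r, E(u,S) = E(u',S) and E(S,v) = E(S,v'), one has E(u,v) if and only if E(u',v'). -/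
open scoped ENNReal

open scoped NNReal

/-!
Let `F` be the pattern on colours that describes `E` at distance more than `r`. Suppose that
`F (c u) (c v)` holds, `(u, v)` and `(u', v')` are far pairs, and the trace of `(u, v)` on `S` is
contained in that of `(u', v')`. It is enough to derive `F (c u') (c v')` when the mixed pattern
`F (c u) (c v')` holds: replacing `E` by its negated converse exchanges the roles of the two pairs
and yields the case where the mixed pattern fails.

Suppose `F (c u') (c v')` fails. Then a point `w ∈ S` with the colour of `v'` lies within `r` of
`u` or of `u'`, since otherwise the pattern gives `E u w` and `¬ E u' w`. Two balls of radius `r`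
cannot contain three points that are pairwise more than `2 * r` apart. So if `S` contains three
such points whenever the colour class of `v'` does, then it may be assumed that at most two points
of `S` form a `2 * r`-cover of this class. One of them is close to `v'`; it is far from `u'`, hence
close to `u`. If `S` also contains a witness of the duality between its neighbourhoods of colours
`c u` and `c v'`, then this witness contradicts the containment of the traces.
-/

section Packing

open Metric

variable {X : Type*} [PseudoEMetricSpace X]

theorem exists_isSeparated_card_eq_or_isCover (n : ℕ) (ε : ℝ≥0) (A : Set X) :
    ∃ T : Finset X, (T : Set X) ⊆ A ∧ T.card ≤ n ∧ IsSeparated ε (T : Set X) ∧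
      (T.card = n ∨ IsCover ε A T) := by
  classical
  induction n with
  | zero => exact ⟨∅, by simp⟩
  | succ n ih =>
    obtain ⟨T, hTA, hTn, hsep, hT⟩ := ih
    by_cases hcov : IsCover ε A T
    · exact ⟨T, hTA, by lia, hsep, .inr hcov⟩
    obtain ⟨x, hxA, hx⟩ : ∃ x ∈ A, ∀ y ∈ T, ε < edist x y := by
      simpa [IsCover, SetRel.IsCover] using hcov
    have hxT : x ∉ T := fun h => by simpa using hx x h
    have hcard : (insert x T).card = n + 1 := by
      rw [Finset.card_insert_of_notMem hxT, hT.resolve_right hcov]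
    refine ⟨insert x T, ?_, hcard.le, ?_, .inl hcard⟩
    · simpa [Set.insert_subset_iff] using ⟨hxA, hTA⟩
    · simpa using hsep.insert fun y hy _ => hx y hy

theorem encard_le_encard_of_isSeparated_of_isCover {ε : ℝ≥0} {T N : Set X}
    (hT : IsSeparated (2 * ε) T) (hN : IsCover ε T N) : T.encard ≤ N.encard := by
  have hT' : IsSeparated ((2 * ε : ℝ≥0) : ℝ≥0∞) T := by simpa using hT
  calc
    T.encard ≤ packingNumber (2 * ε) T := hT'.encard_le_packingNumber subset_rfl
    _ ≤ externalCoveringNumber ε T := packingNumber_two_mul_le_externalCoveringNumber ε T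
    _ ≤ N.encard := hN.externalCoveringNumber_le_encard

theorem lt_edist_of_add_lt_edist {a b : ℝ≥0∞} {x y z : X} (hxy : a + b < edist x y)
    (hyz : edist y z ≤ b) : a < edist x z := by
  refine lt_of_add_lt_add_right (a := b) (hxy.trans_le ?_)
  calc
    edist x y ≤ edist x z + edist y z := edist_triangle_right x y z
    _ ≤ edist x z + b := by gcongr

end Packing

/-- The negated converse of a relation. It turns a duality between `A` and `B` into one between
`B` and `A`. -/
def negSwap {α β : Type*} (E : α → β → Prop) : β → α → Prop := fun b a => ¬ E a b

/-- `D` witnesses that the restriction of `E` to `A × B` has a duality: it is the set `A'` or the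
set `B'` of the definition. -/
def IsDualityWitness {V : Type*} (E : V → V → Prop) (A B D : Set V) : Prop :=
  (D ⊆ A ∧ ∀ b ∈ B, ∃ a ∈ D, ¬ E a b) ∨ (D ⊆ B ∧ ∀ a ∈ A, ∃ b ∈ D, E a b)

/-- The restriction of `E` to `A × B` has a duality of order `k`. -/
def HasDuality {V : Type*} (k : ℕ) (E : V → V → Prop) (A B : Set V) : Prop :=
  ∃ D : Finset V, D.card ≤ k ∧ IsDualityWitness E A B D

/-- `E(u, S) ⊆ E(u', S)` and `E(S, v) ⊆ E(S, v')`. -/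
def TraceLE {V : Type*} (E : V → V → Prop) (S : Set V) (u v u' v' : V) : Prop :=
  (∀ w ∈ S, E u w → E u' w) ∧ ∀ w ∈ S, E w v → E w v'

/-- The pattern `F` on colours describes `E` on all pairs at distance more than `r`. -/
def FactorsBeyond {V ι : Type*} [PseudoEMetricSpace V] (r : ℝ≥0∞) (c : V → ι)
    (F : ι → ι → Prop) (E : V → V → Prop) : Prop :=
  ∀ u v, r < edist u v → (E u v ↔ F (c u) (c v))

section Relations

variable {V : Type*} {E : V → V → Prop}

theorem hasDuality_iff {k : ℕ} {A B : Set V} :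
    HasDuality k E A B ↔
      (∃ A' : Finset V, (A' : Set V) ⊆ A ∧ A'.card ≤ k ∧ ∀ b ∈ B, ∃ a ∈ A', ¬ E a b) ∨
      (∃ B' : Finset V, (B' : Set V) ⊆ B ∧ B'.card ≤ k ∧ ∀ a ∈ A, ∃ b ∈ B', E a b) := by
  simp only [HasDuality, IsDualityWitness, and_or_left, exists_or, and_left_comm, Finset.mem_coe]

theorem IsDualityWitness.negSwap {A B D : Set V} (h : IsDualityWitness E A B D) :
    IsDualityWitness (negSwap E) B A D :=
  h.symm.imp_left fun ⟨hD, hE⟩ => ⟨hD, by simpa only [_root_.negSwap, not_not] using hE⟩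

theorem HasDuality.negSwap {k : ℕ} {A B : Set V} (h : HasDuality k E A B) :
    HasDuality k (negSwap E) B A :=
  h.imp fun _ hD => hD.imp_right IsDualityWitness.negSwap

theorem TraceLE.mono {S T : Set V} {u v u' v' : V} (hST : S ⊆ T) (h : TraceLE E T u v u' v') :
    TraceLE E S u v u' v' :=
  ⟨fun w hw => h.1 w (hST hw), fun w hw => h.2 w (hST hw)⟩

theorem TraceLE.negSwap {S : Set V} {u v u' v' : V} (h : TraceLE E S u v u' v') :
    TraceLE (negSwap E) S v' u' v u :=
  ⟨fun w hw => mt (h.2 w hw), fun w hw => mt (h.1 w hw)⟩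

end Relations

section Pattern

variable {V ι : Type*} [PseudoEMetricSpace V] {E : V → V → Prop} {c : V → ι}
  {F : ι → ι → Prop}

theorem exists_factorsBeyond {r : ℝ≥0∞}
    (hc : ∀ u v u' v', r < edist u v → r < edist u' v' → c u = c u' → c v = c v' →
      (E u v ↔ E u' v')) :
    ∃ F, FactorsBeyond r c F E :=
  ⟨fun a b => ∃ u v, c u = a ∧ c v = b ∧ r < edist u v ∧ E u v, fun u v huv =>
    ⟨fun hE => ⟨u, v, rfl, rfl, huv, hE⟩, fun ⟨u', v', hu, hv, huv', hE⟩ =>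
      (hc u' v' u v huv' huv hu hv).1 hE⟩⟩

namespace FactorsBeyond

protected theorem negSwap {r : ℝ≥0∞} (hF : FactorsBeyond r c F E) :
    FactorsBeyond r c (negSwap F) (negSwap E) :=
  fun u v huv => not_congr (hF v u (edist_comm u v ▸ huv))

theorem edist_le_or_edist_le {r : ℝ≥0∞} (hF : FactorsBeyond r c F E) {u u' w : V}
    (hw : E u w → E u' w) (hu : F (c u) (c w)) (hu' : ¬ F (c u') (c w)) :
    edist u w ≤ r ∨ edist u' w ≤ r := by
  by_contra! ⟨huw, hu'w⟩
  exact hu' ((hF u' w hu'w).1 (hw ((hF u w huw).2 hu)))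

theorem encard_le_two_of_isSeparated {r : ℝ≥0} (hF : FactorsBeyond r c F E) {T : Set V}
    (hT : Metric.IsSeparated (2 * r) T) {u u' : V} (hw : ∀ w ∈ T, E u w → E u' w)
    (hu : ∀ w ∈ T, F (c u) (c w)) (hu' : ∀ w ∈ T, ¬ F (c u') (c w)) : T.encard ≤ 2 := by
  have hcov : Metric.IsCover r T {u, u'} := fun w hwT => by
    simpa [edist_comm w] using hF.edist_le_or_edist_le (hw w hwT) (hu w hwT) (hu' w hwT)
  calc
    T.encard ≤ ({u, u'} : Set V).encard := encard_le_encard_of_isSeparated_of_isCover hT hcov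
    _ ≤ ({u'} : Set V).encard + 1 := Set.encard_insert_le {u'} u
    _ = 2 := by rw [Set.encard_singleton, one_add_one_eq_two]

theorem pattern_of_isDualityWitness {r : ℝ≥0∞} (hF : FactorsBeyond r c F E) {D : Set V}
    {b u v u' v' : V} (hD : IsDualityWitness E (c ⁻¹' {c u} ∩ Metric.closedEBall b r)
      (c ⁻¹' {c v'} ∩ Metric.closedEBall b (2 * r)) D)
    (hub : edist u b ≤ r) (hv'b : edist v' b ≤ 2 * r) (huv : 3 * r < edist u v)
    (hu'b : 3 * r < edist u' b) (htr : TraceLE E D u v u' v') (hpat : F (c u) (c v)) :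
    F (c u') (c v') := by
  have three_mul_eq : 3 * r = r + 2 * r := by ring
  rw [three_mul_eq] at huv hu'b
  rcases hD with ⟨hDA, hD⟩ | ⟨hDB, hD⟩
  · obtain ⟨x, hxD, hxv'⟩ := hD v' ⟨rfl, hv'b⟩
    obtain ⟨hxc : c x = c u, hxb : edist x b ≤ r⟩ := hDA hxD
    have hux : edist u x ≤ 2 * r := by
      calc
        edist u x ≤ edist u b + edist x b := edist_triangle_right u x b
        _ ≤ r + r := by gcongr
        _ = 2 * r := (two_mul r).symm
    have hxv : r < edist x v := by
      rw [edist_comm] at huv ⊢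
      exact lt_edist_of_add_lt_edist huv hux
    exact absurd (htr.2 x hxD ((hF x v hxv).2 (hxc ▸ hpat))) hxv'
  · obtain ⟨y, hyD, huy⟩ := hD u ⟨rfl, hub⟩
    obtain ⟨hyc : c y = c v', hyb : edist y b ≤ 2 * r⟩ := hDB hyD
    have hu'y : r < edist u' y := lt_edist_of_add_lt_edist hu'b (edist_comm y b ▸ hyb)
    exact hyc ▸ (hF u' y hu'y).1 (htr.1 y hyD huy)

variable {k : ℕ} {r : ℝ≥0} [Fintype ι]

theorem exists_finset_pattern_of_color (hF : FactorsBeyond r c F E)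
    (hdual : ∀ A B : Set V, HasDuality k E A B) (β : ι) :
    ∃ S : Finset V, S.card ≤ 3 + 3 * Fintype.card ι * k ∧ ∀ u v u' v',
      c v' = β → 5 * r < edist u v → 5 * r < edist u' v' → TraceLE E S u v u' v' →
      F (c u) (c v) → F (c u) (c v') → F (c u') (c v') := by
  classical
  obtain ⟨T, hTβ, hTcard, hsep, hT⟩ :=
    exists_isSeparated_card_eq_or_isCover 3 (2 * r) (c ⁻¹' {β})
  push_cast at hsep
  choose D hDk hD using fun (b : V) (α : ι) =>
    hdual (c ⁻¹' {α} ∩ Metric.closedEBall b r) (c ⁻¹' {β} ∩ Metric.closedEBall b (2 * r))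
  refine ⟨T ∪ (T ×ˢ Finset.univ).biUnion fun p => D p.1 p.2, ?_, ?_⟩
  · have hcard := Finset.card_biUnion_le_card_mul (T ×ˢ Finset.univ) (fun p => D p.1 p.2) k
      fun p _ => hDk p.1 p.2
    rw [Finset.card_product, Finset.card_univ] at hcard
    grw [Finset.card_union_le, hcard, hTcard]
  rintro u v u' v' rfl huv hu'v' htr hpat hmix
  by_contra hpat'
  have htrT : ∀ w ∈ T, E u w → E u' w := fun w hw =>
    htr.1 w (Finset.mem_union_left _ hw)
  rcases hT with hT3 | hcov
  · have hT2 : (T : Set V).encard ≤ 2 := hF.encard_le_two_of_isSeparated hsep htrT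
      (fun w hw => (hTβ hw : c w = c v') ▸ hmix) fun w hw => (hTβ hw : c w = c v') ▸ hpat'
    rw [Set.encard_coe_eq_coe_finsetCard, hT3] at hT2
    exact absurd hT2 (by decide)
  · obtain ⟨b, hbT, hv'b⟩ := hcov (rfl : c v' = c v')
    replace hv'b : edist v' b ≤ 2 * r := by simpa using hv'b
    have hbc : c b = c v' := hTβ hbT
    have hu'b : 3 * r < edist u' b :=
      lt_edist_of_add_lt_edist ((by ring : (3 * r + 2 * r : ℝ≥0∞) = 5 * r).trans_lt hu'v') hv'b
    have hub : edist u b ≤ r :=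
      (hF.edist_le_or_edist_le (htrT b hbT) (hbc ▸ hmix) (hbc ▸ hpat')).resolve_right
        (lt_of_le_of_lt (le_mul_of_one_le_left' (by norm_num)) hu'b).not_ge
    have hDS : (D b (c u) : Set V) ⊆
        (T ∪ (T ×ˢ Finset.univ).biUnion fun p => D p.1 p.2 : Finset V) := fun w hw =>
      Finset.mem_union_right _ <| Finset.mem_biUnion.2 ⟨(b, c u), by simpa using hbT, hw⟩
    exact hpat' (hF.pattern_of_isDualityWitness (hD b (c u)) hub hv'b
      (huv.trans_le' (by gcongr; norm_num)) hu'b (htr.mono hDS) hpat)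

theorem exists_finset_pattern_of_mixed (hF : FactorsBeyond r c F E)
    (hdual : ∀ A B : Set V, HasDuality k E A B) :
    ∃ S : Finset V, S.card ≤ Fintype.card ι * (3 + 3 * Fintype.card ι * k) ∧ ∀ u v u' v',
      5 * r < edist u v → 5 * r < edist u' v' → TraceLE E S u v u' v' →
      F (c u) (c v) → F (c u) (c v') → F (c u') (c v') := by
  classical
  choose S hS hpat using hF.exists_finset_pattern_of_color hdual
  refine ⟨Finset.univ.biUnion S, Finset.card_biUnion_le_card_mul _ _ _ fun β _ => hS β, ?_⟩
  intro u v u' v' huv hu'v' htr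
  refine hpat (c v') u v u' v' rfl huv hu'v' (htr.mono ?_)
  exact_mod_cast Finset.subset_biUnion_of_mem S (Finset.mem_univ (c v'))

end FactorsBeyond

end Pattern

theorem independence_nip_general {V ι : Type*} [PseudoEMetricSpace V] [Fintype ι] {k : ℕ}
    {r : ℝ≥0} {E : V → V → Prop} {c : V → ι} (hdual : ∀ A B : Set V, HasDuality k E A B)
    (hc : ∀ u v u' v', r < edist u v → r < edist u' v' → c u = c u' → c v = c v' →
      (E u v ↔ E u' v')) :
    ∃ S : Finset V, S.card ≤ 2 * (Fintype.card ι * (3 + 3 * Fintype.card ι * k)) ∧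
      ∀ u v u' v', 5 * r < edist u v → 5 * r < edist u' v' → TraceLE E S u v u' v' →
        E u v → E u' v' := by
  classical
  obtain ⟨F, hF⟩ := exists_factorsBeyond hc
  obtain ⟨S₁, hS₁, h₁⟩ := hF.exists_finset_pattern_of_mixed hdual
  obtain ⟨S₂, hS₂, h₂⟩ :=
    hF.negSwap.exists_finset_pattern_of_mixed fun A B => (hdual B A).negSwap
  refine ⟨S₁ ∪ S₂, by grw [Finset.card_union_le, hS₁, hS₂, two_mul], ?_⟩
  intro u v u' v' huv hu'v' htr hE
  have htr₁ : TraceLE E S₁ u v u' v' := htr.mono (by simp)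
  have htr₂ : TraceLE (negSwap E) S₂ v' u' v u := (htr.mono (by simp)).negSwap
  have far {x y : V} (h : 5 * r < edist x y) : r < edist x y :=
    lt_of_le_of_lt (le_mul_of_one_le_left' (by norm_num)) h
  rw [hF u v (far huv)] at hE
  rw [hF u' v' (far hu'v')]
  by_cases hmix : F (c u) (c v')
  · exact h₁ u v u' v' huv hu'v' htr₁ hE hmix
  · rw [edist_comm] at huv hu'v'
    by_contra hpat'
    exact h₂ v' u' v u hu'v' huv htr₂ hpat' hmix hE

/-- Theorem 11 of the paper. For all `k, t` there is `s = O(k t²)` such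
that for every `r`: if a finite set `V` carries a binary relation `E` all of whose
restrictions `E ∩ (A × B)` have a duality of order `k`, a pseudometric `dist`, and a
partition into at most `t` classes (given by a coloring `c : V → Fin t`) such that
`E u v` depends only on the classes of `u` and `v` whenever `dist u v > r`, then there
is `S ⊆ V` with `|S| ≤ s` such that `E u v` depends only on `E(u,S)` and `E(S,v)` for
all `u, v` with `dist u v > 5r`. -/
theorem independence_nip (k t : ℕ) :
    ∃ s : ℕ, ∀ (r : ℕ) (V : Type) [Fintype V]
      (E : V → V → Prop) (dist : V → V → ℝ≥0∞) (c : V → Fin t),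
      (∀ u v, dist u v = dist v u) →
      (∀ v, dist v v = 0) →
      (∀ u v w, dist u w ≤ dist u v + dist v w) →
      (∀ A B : Set V,
        (∃ A' : Finset V, (A' : Set V) ⊆ A ∧ A'.card ≤ k ∧ ∀ b ∈ B, ∃ a ∈ A', ¬ E a b) ∨
        (∃ B' : Finset V, (B' : Set V) ⊆ B ∧ B'.card ≤ k ∧ ∀ a ∈ A, ∃ b ∈ B', E a b)) →
      (∀ u v u' v' : V, (r : ℝ≥0∞) < dist u v → (r : ℝ≥0∞) < dist u' v' →
        c u = c u' → c v = c v' → (E u v ↔ E u' v')) →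
      ∃ S : Finset V, S.card ≤ s ∧
        ∀ u v u' v' : V,
          ((5 * r : ℕ) : ℝ≥0∞) < dist u v → ((5 * r : ℕ) : ℝ≥0∞) < dist u' v' →
          (∀ w ∈ S, E u w ↔ E u' w) → (∀ w ∈ S, E w v ↔ E w v') →
          (E u v ↔ E u' v') := by
  refine ⟨2 * (t * (3 + 3 * t * k)), fun r V _ E dist c hsymm hself htri hdual hc => ?_⟩
  let _ : PseudoEMetricSpace V :=
    { edist := dist, edist_self := hself, edist_comm := hsymm, edist_triangle := htri }
  obtain ⟨S, hS, hE⟩ := independence_nip_general (r := r) (c := c)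
    (fun A B => hasDuality_iff.2 (hdual A B)) hc
  refine ⟨S, by simpa using hS, fun u v u' v' huv hu'v' hu hv => ?_⟩
  push_cast at huv hu'v'
  exact ⟨hE u v u' v' huv hu'v' ⟨fun w hw => (hu w hw).1, fun w hw => (hv w hw).1⟩,
    hE u' v' u v hu'v' huv ⟨fun w hw => (hu w hw).2, fun w hw => (hv w hw).2⟩⟩
end

section
/- Let V be a finite set with a binary relation E ⊆ V × V, a pseudometric dist, a partition 𝒫 of V, and a number r such that for all u,v with dist(u,v) > r the truth of E(u,v) depends only on C(u) and C(v). Let S ⊆ V, let u', v', v ∈ V with u' ∈ C(u'), and suppose: (i) the class C(u') is small, i.e., there is c_0 ∈ C(u') with dist(c,c_0) ≤ 2r for all c ∈ C(u'); (ii) dist(u',v') > 5r; (iii) ¬E generically holds between C(u') and C(v'); (iv) E(S,v) = E(S,v'). Then ¬E(s,v) holds for every s ∈ S ∩ C(u'). -/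
open scoped ENNReal

/-!
Moving from `u'` to another element of its small class costs at most twice the radius, so every
`s ∈ C(u')` is still at distance more than `r` from `v'`. Hence the generic relation between the
two classes gives `¬E s v'`, and for `s ∈ S` this transfers to `v` because `v` and `v'` have the
same neighbours in `S`.
-/

section GenericRelations

variable {V R : Type*} [LT R] {E P : V → V → Prop} {dist : V → V → R} {r : R}

/-- Beyond distance `r`, the truth of `E u v` depends only on the classes of `u` and `v`. The
partition is encoded by the relation `P` of lying in the same class. -/
def DependsOnClasses (E P : V → V → Prop) (dist : V → V → R) (r : R) : Prop :=
  ∀ u v u' v' : V, r < dist u v → r < dist u' v' → P u u' → P v v' → (E u v ↔ E u' v')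

/-- `E` generically holds between the classes of `u` and `v`: it holds for some pair of
representatives at distance more than `r`. The classes are given by representatives, and
generic failure of `E` is `HoldsGenerically` for the complement of `E`. -/
def HoldsGenerically (E P : V → V → Prop) (dist : V → V → R) (r : R) (u v : V) : Prop :=
  ∃ c d, P c u ∧ P d v ∧ r < dist c d ∧ E c d

theorem DependsOnClasses.not (h : DependsOnClasses E P dist r) :
    DependsOnClasses (fun u v ↦ ¬ E u v) P dist r :=
  fun u v u' v' huv huv' hu hv ↦ not_congr (h u v u' v' huv huv' hu hv)

theorem HoldsGenerically.holds_of_lt_dist {u v s t : V} (h : HoldsGenerically E P dist r u v)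
    (hP : Equivalence P) (hdep : DependsOnClasses E P dist r)
    (hs : P s u) (ht : P t v) (hst : r < dist s t) : E s t := by
  obtain ⟨c, d, hc, hd, hcd, hE⟩ := h
  exact (hdep c d s t hcd hst (hP.trans hc (hP.symm hs)) (hP.trans hd (hP.symm ht))).1 hE

end GenericRelations

section SmallClasses

variable {V R : Type*} [AddCommMonoid R] [LinearOrder R] [IsOrderedAddMonoid R]
  {E P : V → V → Prop} {dist : V → V → R} {r ρ : R}

theorem lt_dist_of_dist_center_le {c a s t : V} (hsymm : ∀ u v, dist u v = dist v u)
    (htri : ∀ u v w, dist u w ≤ dist u v + dist v w)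
    (ha : dist a c ≤ ρ) (hs : dist s c ≤ ρ) (hat : ρ + ρ + r < dist a t) : r < dist s t := by
  have has : dist a s ≤ ρ + ρ :=
    (htri a c s).trans (add_le_add ha (hsymm c s ▸ hs))
  refine lt_of_add_lt_add_left (a := ρ + ρ) ?_
  calc ρ + ρ + r < dist a t := hat
    _ ≤ dist a s + dist s t := htri a s t
    _ ≤ ρ + ρ + dist s t := by gcongr

theorem claim_small_general (hP : Equivalence P)
    (hsymm : ∀ u v, dist u v = dist v u)
    (htri : ∀ u v w, dist u w ≤ dist u v + dist v w)
    (hdep : DependsOnClasses E P dist r) {S : Set V} {u' v' v : V}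
    (hsmall : ∃ c₀, ∀ c, P c u' → dist c c₀ ≤ ρ)
    (hfar : ρ + ρ + r < dist u' v')
    (hgen : HoldsGenerically (fun c d ↦ ¬ E c d) P dist r u' v')
    (hSv : ∀ w ∈ S, E w v → E w v') :
    ∀ s ∈ S, P s u' → ¬ E s v := by
  intro s hs hsu'
  obtain ⟨c₀, hc₀⟩ := hsmall
  have hsv' : r < dist s v' :=
    lt_dist_of_dist_center_le hsymm htri (hc₀ u' (hP.refl u')) (hc₀ s hsu') hfar
  have hE : ¬ E s v' := hgen.holds_of_lt_dist hP hdep.not hsu' (hP.refl v') hsv'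
  exact mt (hSv s hs) hE

end SmallClasses

/-- Claim 2 in the paper. Let `V` be a finite set with a relation `E`,
a pseudometric `dist`, a partition (given as an equivalence relation `P`, the class
`C(v)` being `{w | P w v}`), and `r` such that `E u v` depends only on the classes of
`u` and `v` whenever `dist u v > r`. Let `S ⊆ V` and `u', v', v ∈ V` with:
(i) `C(u')` is small, i.e. some `c₀ ∈ C(u')` has `dist c c₀ ≤ 2r` for all `c ∈ C(u')`;
(ii) `dist u' v' > 5r`;
(iii) `¬E` generically holds between `C(u')` and `C(v')`;
(iv) `E(S, v) = E(S, v')`.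
Then `¬E s v` for every `s ∈ S ∩ C(u')`. -/
theorem claim_small {V : Type*} [Fintype V]
    (E : V → V → Prop) (dist : V → V → ℝ≥0∞) (P : V → V → Prop)
    (hequiv : Equivalence P)
    (hsymm : ∀ u v, dist u v = dist v u)
    (hrefl : ∀ v, dist v v = 0)
    (htri : ∀ u v w, dist u w ≤ dist u v + dist v w)
    (r : ℝ≥0∞)
    (hdep : ∀ u v u' v' : V, r < dist u v → r < dist u' v' →
      P u u' → P v v' → (E u v ↔ E u' v'))
    (S : Set V) (u' v' v : V)
    (hsmall : ∃ c₀, P c₀ u' ∧ ∀ c, P c u' → dist c c₀ ≤ 2 * r)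
    (hfar : 5 * r < dist u' v')
    (hgen : ∃ c d, P c u' ∧ P d v' ∧ r < dist c d ∧ ¬ E c d)
    (hSv : ∀ w ∈ S, E w v ↔ E w v') :
    ∀ s ∈ S, P s u' → ¬ E s v := by
  have hradius : 2 * r + 2 * r + r = 5 * r := by ring
  exact claim_small_general hequiv hsymm htri hdep (hsmall.imp fun _ h ↦ h.2)
    (hradius ▸ hfar) hgen fun w hw ↦ (hSv w hw).1
end
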